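/- Let ω and ν be radial weights such that P_ω : L^∞_ν̂ → H^∞_ν̂ is bounded, and suppose that ω ∈ D̂ or ν ∈ D̂. Then both ω ∈ D and ν ∈ D. -/

import Mathlib

open MeasureTheory Set Complex
open scoped ENNReal

noncomputable section

/-- The open unit disc in the complex plane. -/
def unitDisc : Set ℂ := Metric.ball 0 1

/-- Tail integral `ω̂(r) = ∫_r^1 ω(s) ds`. -/
def tl (ω : ℝ → ℝ) (r : ℝ) : ℝ := ∫ s in r..1, ω s

/-- Moment `ω_x = ∫_0^1 s^x ω(s) ds` (real power in the exponent). -/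
def mom (ω : ℝ → ℝ) (x : ℝ) : ℝ := ∫ s in (0:ℝ)..1, s ^ x * ω s

/-- `ω` is a radial weight: nonnegative and integrable on `[0,1)`, with positive
tail integrals. -/
def IsRadialWeight (ω : ℝ → ℝ) : Prop :=
  (∀ s ∈ Ico (0:ℝ) 1, 0 ≤ ω s) ∧ IntegrableOn ω (Ico (0:ℝ) 1) ∧
    ∀ r ∈ Ico (0:ℝ) 1, 0 < tl ω r

/-- The upper doubling class `D̂`: `sup_{0≤r<1} ω̂(r)/ω̂((1+r)/2) < ∞`. -/
def Dhat (ω : ℝ → ℝ) : Prop :=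
  ∃ C : ℝ, ∀ r ∈ Ico (0:ℝ) 1, tl ω r ≤ C * tl ω ((1 + r) / 2)

/-- The class `Ď`: there are `K > 1`, `C > 1` with `ω̂(r) ≥ C ω̂(1 - (1-r)/K)`. -/
def Dcheck (ω : ℝ → ℝ) : Prop :=
  ∃ K C : ℝ, 1 < K ∧ 1 < C ∧ ∀ r ∈ Ico (0:ℝ) 1, C * tl ω (1 - (1 - r) / K) ≤ tl ω r

/-- The class `D = D̂ ∩ Ď`. -/
def DD (ω : ℝ → ℝ) : Prop := Dhat ω ∧ Dcheck ω

/-- The Bergman reproducing kernel `B^ω_z(ζ) = Σ_n (conj z · ζ)^n / (2 ω_{2n+1})`. -/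
def bKer (ω : ℝ → ℝ) (z ζ : ℂ) : ℂ :=
  ∑' n : ℕ, (starRingEnd ℂ z * ζ) ^ n / ((2 * mom ω (2 * (n : ℝ) + 1) : ℝ) : ℂ)

/-- The integrand of the Bergman projection. -/
def bInt (ω : ℝ → ℝ) (f : ℂ → ℂ) (z ζ : ℂ) : ℂ :=
  f ζ * starRingEnd ℂ (bKer ω z ζ) * ((ω ‖ζ‖ : ℝ) : ℂ)

/-- The Bergman projection `P_ω f(z) = ∫_𝔻 f(ζ) conj(B^ω_z(ζ)) ω(ζ) dA(ζ)`,
where `dA` is normalized area measure `dx dy / π`. -/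
def bProj (ω : ℝ → ℝ) (f : ℂ → ℂ) (z : ℂ) : ℂ :=
  (Real.pi : ℂ)⁻¹ * ∫ ζ in unitDisc, bInt ω f z ζ

/-- The weighted sup-norm `ess sup_{z ∈ 𝔻} |f(z)| v(|z|)`, valued in `ℝ≥0∞`. -/
def wSup (v : ℝ → ℝ) (f : ℂ → ℂ) : ℝ≥0∞ :=
  essSup (fun z => ENNReal.ofReal (‖f z‖ * v ‖z‖)) (volume.restrict unitDisc)

/-- `P_ω : L^∞_v → H^∞_v` is bounded: there is `C > 0` so that for every
`f ∈ L^∞_v` the defining integral converges absolutely at every point of `𝔻`,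
`P_ω f` is analytic on `𝔻`, and `‖P_ω f‖_{L^∞_v} ≤ C ‖f‖_{L^∞_v}`. -/
def ProjBddH (ω v : ℝ → ℝ) : Prop :=
  ∃ C : ℝ, 0 < C ∧ ∀ f : ℂ → ℂ,
    AEStronglyMeasurable f (volume.restrict unitDisc) → wSup v f < ⊤ →
    (∀ z ∈ unitDisc, IntegrableOn (bInt ω f z) unitDisc) ∧
    DifferentiableOn ℂ (bProj ω f) unitDisc ∧
    wSup v (bProj ω f) ≤ ENNReal.ofReal C * wSup v f

/-- `P_ω : L^∞_v → B^∞_v` is bounded: there is `C > 0` so that for every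
`f ∈ L^∞_v` the defining integral converges absolutely at every point of `𝔻`,
`P_ω f` is analytic on `𝔻`, and `‖P_ω f‖_{B^∞_v} ≤ C ‖f‖_{L^∞_v}`. -/
def ProjBddB (ω v : ℝ → ℝ) : Prop :=
  ∃ C : ℝ, 0 < C ∧ ∀ f : ℂ → ℂ,
    AEStronglyMeasurable f (volume.restrict unitDisc) → wSup v f < ⊤ →
    (∀ z ∈ unitDisc, IntegrableOn (bInt ω f z) unitDisc) ∧
    DifferentiableOn ℂ (bProj ω f) unitDisc ∧
    ∀ z ∈ unitDisc,
      ENNReal.ofReal ((1 - ‖z‖) * v ‖z‖ * ‖deriv (bProj ω f) z‖) ≤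
        ENNReal.ofReal C * wSup v f

/-- The moment condition `sup_{x ≥ 0} (ν_x / ω_{2x}) (ω/ν̂)_x < ∞`. -/
def MomCond (ω ν : ℝ → ℝ) : Prop :=
  ∃ C : ℝ, ∀ x : ℝ, 0 ≤ x →
    mom ν x / mom ω (2 * x) * mom (fun s => ω s / tl ν s) x ≤ C

/-- The tail condition `sup_{0 ≤ r < 1} (ν̂(r)/ω̂(r)) ∫_r^1 ω(s)/ν̂(s) ds < ∞`. -/
def TailCond (ω ν : ℝ → ℝ) : Prop :=
  ∃ C : ℝ, ∀ r ∈ Ico (0:ℝ) 1, tl ν r / tl ω r * tl (fun s => ω s / tl ν s) r ≤ C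


/-- Moments with natural exponents, as set integrals. -/
def mN (ω : ℝ → ℝ) (k : ℕ) : ℝ := ∫ s in Ioo (0:ℝ) 1, s ^ k * ω s

theorem mom_eq_mN (ω : ℝ → ℝ) (n : ℕ) : mom ω (2 * (n : ℝ) + 1) = mN ω (2 * n + 1) := by
  unfold mom mN
  rw [intervalIntegral.integral_of_le zero_le_one, integral_Ioc_eq_integral_Ioo]
  refine setIntegral_congr_fun measurableSet_Ioo fun s _ => ?_
  have : (2 * (n : ℝ) + 1) = ((2 * n + 1 : ℕ) : ℝ) := by push_cast; ring
  simp only [this, Real.rpow_natCast]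

theorem IsRadialWeight.intOn {ω : ℝ → ℝ} (h : IsRadialWeight ω) :
    IntegrableOn ω (Ioo (0:ℝ) 1) := h.2.1.mono_set Ioo_subset_Ico_self

theorem IsRadialWeight.int_pow {ω : ℝ → ℝ} (h : IsRadialWeight ω) (k : ℕ) :
    IntegrableOn (fun s => s ^ k * ω s) (Ioo (0:ℝ) 1) := by
  refine Integrable.mono h.intOn ?_ ?_
  · exact ((continuous_pow k).aestronglyMeasurable).mul h.intOn.aestronglyMeasurable
  · filter_upwards [ae_restrict_mem measurableSet_Ioo] with s hs
    rw [norm_mul, norm_pow]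
    refine mul_le_of_le_one_left (norm_nonneg _) (pow_le_one₀ (norm_nonneg _) ?_)
    rw [Real.norm_eq_abs, abs_of_pos hs.1]; exact hs.2.le

theorem tl_eq (ω : ℝ → ℝ) {r : ℝ} (hr : r ≤ 1) : tl ω r = ∫ s in Ioo r 1, ω s := by
  unfold tl
  rw [intervalIntegral.integral_of_le hr, integral_Ioc_eq_integral_Ioo]

theorem IsRadialWeight.tl_anti {ω : ℝ → ℝ} (h : IsRadialWeight ω) {r t : ℝ} (hr : 0 ≤ r)
    (hrt : r ≤ t) (ht : t ≤ 1) : tl ω t ≤ tl ω r := by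
  rw [tl_eq ω ht, tl_eq ω (hrt.trans ht)]
  refine setIntegral_mono_set (h.intOn.mono_set (Ioo_subset_Ioo_left hr)) ?_
    (Ioo_subset_Ioo_left hrt).eventuallyLE
  filter_upwards [ae_restrict_mem measurableSet_Ioo] with s hs
  exact h.1 s ⟨hr.trans hs.1.le, hs.2⟩

theorem IsRadialWeight.tl_pos {ω : ℝ → ℝ} (h : IsRadialWeight ω) {r : ℝ} (hr : 0 ≤ r)
    (hr1 : r < 1) : 0 < tl ω r := h.2.2 r ⟨hr, hr1⟩

theorem IsRadialWeight.tl_cont {ω : ℝ → ℝ} (h : IsRadialWeight ω) :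
    ContinuousOn (tl ω) (Icc 0 1) := by
  have := intervalIntegral.continuousOn_primitive_interval_left (f := ω) (μ := volume)
    (a := 0) (b := 1) (by
      rw [uIcc_of_le zero_le_one]
      exact (integrableOn_Icc_iff_integrableOn_Ico).2 h.2.1)
  rwa [uIcc_of_le zero_le_one] at this

theorem IsRadialWeight.mN_ge {ω : ℝ → ℝ} (h : IsRadialWeight ω) {r : ℝ} (hr : 0 ≤ r)
    (hr1 : r < 1) (k : ℕ) : r ^ k * tl ω r ≤ mN ω k := by
  rw [tl_eq ω hr1.le, ← integral_const_mul]
  refine le_trans (setIntegral_mono_on ((h.intOn.mono_set (Ioo_subset_Ioo_left hr)).const_mul _)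
    ((h.int_pow k).mono_set (Ioo_subset_Ioo_left hr)) measurableSet_Ioo (fun s hs => ?_))
    (setIntegral_mono_set (h.int_pow k) ?_ (Ioo_subset_Ioo_left hr).eventuallyLE)
  · exact mul_le_mul_of_nonneg_right (pow_le_pow_left₀ hr hs.1.le k) (h.1 s ⟨hr.trans hs.1.le, hs.2⟩)
  · filter_upwards [ae_restrict_mem measurableSet_Ioo] with s hs
    exact mul_nonneg (pow_nonneg hs.1.le k) (h.1 s ⟨hs.1.le, hs.2⟩)

theorem IsRadialWeight.mN_pos {ω : ℝ → ℝ} (h : IsRadialWeight ω) (k : ℕ) : 0 < mN ω k :=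
  lt_of_lt_of_le (mul_pos (by positivity) (h.tl_pos (r := 1/2) (by norm_num) (by norm_num)))
    (h.mN_ge (r := 1/2) (by norm_num) (by norm_num) k)

theorem summable_ker {ω : ℝ → ℝ} (h : IsRadialWeight ω) {t : ℝ} (ht : 0 ≤ t) (ht1 : t < 1) :
    Summable fun n : ℕ => t ^ n / (2 * mN ω (2 * n + 1)) := by
  set ρ := Real.sqrt ((1 + t) / 2) with hρ
  have hρ0 : 0 < ρ := Real.sqrt_pos.2 (by linarith)
  have hρ2 : ρ ^ 2 = (1 + t) / 2 := Real.sq_sqrt (by linarith)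
  have hρ1 : ρ < 1 := by nlinarith
  have hc := h.tl_pos hρ0.le hρ1
  have hq : t / ρ ^ 2 < 1 := by rw [div_lt_one (by positivity)]; linarith
  refine Summable.of_nonneg_of_le (fun n => ?_) (fun n => ?_)
    ((summable_geometric_of_lt_one (by positivity) hq).mul_left (1 / (2 * (ρ * tl ω ρ))))
  · have := h.mN_pos (2 * n + 1); positivity
  · have h1 := h.mN_ge hρ0.le hρ1 (2 * n + 1)
    calc t ^ n / (2 * mN ω (2 * n + 1)) ≤ t ^ n / (2 * (ρ ^ (2 * n + 1) * tl ω ρ)) := by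
          gcongr
      _ = _ := by
          rw [div_pow, ← pow_mul, pow_succ]; field_simp

theorem polar_int (h : ℝ → ℂ) (g : ℝ → ℝ) (n : ℕ) :
    ∫ ζ in unitDisc, h (arg ζ) * (g ‖ζ‖ : ℂ) * (starRingEnd ℂ ζ) ^ n =
      ((mN g (n + 1) : ℝ) : ℂ) * ∫ θ in Ioo (-Real.pi) Real.pi, h θ * exp (-(n * θ * I)) := by
  have hm : MeasurableSet unitDisc := measurableSet_ball
  rw [← integral_indicator hm, ← Complex.integral_comp_polarCoord_symm]
  have h1 : ∫ p in polarCoord.target, p.1 • unitDisc.indicator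
      (fun ζ : ℂ => h (arg ζ) * (g ‖ζ‖ : ℂ) * (starRingEnd ℂ ζ) ^ n) (Complex.polarCoord.symm p)
      = ∫ p in Ioi (0:ℝ) ×ˢ Ioo (-Real.pi) Real.pi,
        (Ioo (0:ℝ) 1).indicator (fun s : ℝ => ((s ^ (n+1) * g s : ℝ) : ℂ)) p.1 *
          (h p.2 * exp (-(n * p.2 * I))) := by
    rw [polarCoord_target]
    refine setIntegral_congr_fun (measurableSet_Ioi.prod measurableSet_Ioo) fun p hp => ?_
    obtain ⟨hp1, hp2⟩ := hp
    simp only [mem_Ioi] at hp1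
    have hnorm : ‖Complex.polarCoord.symm p‖ = p.1 := by
      rw [Complex.norm_polarCoord_symm, abs_of_pos hp1]
    have harg : arg (Complex.polarCoord.symm p) = p.2 := by
      rw [Complex.polarCoord_symm_apply]
      have := Complex.arg_mul_cos_add_sin_mul_I hp1 (θ := p.2) ⟨hp2.1, hp2.2.le⟩
      push_cast at this ⊢; exact this
    have hexp : starRingEnd ℂ (Complex.polarCoord.symm p) = p.1 * exp (-(p.2 * I)) := by
      rw [Complex.polarCoord_symm_apply]
      have : exp (-(p.2 * I)) = starRingEnd ℂ (exp (p.2 * I)) := by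
        rw [← Complex.exp_conj]; simp
      rw [this, Complex.exp_mul_I]; simp
    by_cases hlt : p.1 < 1
    · rw [indicator_of_mem (show p.1 ∈ Ioo (0:ℝ) 1 from ⟨hp1, hlt⟩), indicator_of_mem
        (by unfold unitDisc; rw [mem_ball_zero_iff, hnorm]; exact hlt)]
      rw [hnorm, harg, hexp, mul_pow, ← Complex.exp_nat_mul, Complex.real_smul]
      have : (n : ℂ) * -(↑p.2 * I) = -(n * p.2 * I) := by ring
      rw [this]
      push_cast; ring
    · have e1 : p.1 ∉ Ioo (0:ℝ) 1 := fun hh => hlt hh.2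
      have e2 : Complex.polarCoord.symm p ∉ unitDisc := by
        unfold unitDisc; rw [mem_ball_zero_iff, hnorm]; exact hlt
      rw [indicator_of_notMem e1, indicator_of_notMem e2]
      simp
  rw [h1, Measure.volume_eq_prod, setIntegral_prod_mul
    ((Ioo (0:ℝ) 1).indicator (fun s : ℝ => ((s ^ (n+1) * g s : ℝ) : ℂ)))
    (fun θ : ℝ => h θ * exp (-(n * θ * I)))]
  congr 1
  rw [setIntegral_indicator measurableSet_Ioo, inter_eq_self_of_subset_right Ioo_subset_Ioi_self]
  unfold mN
  exact integral_ofReal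

theorem rad_int (g : ℝ → ℂ) : IntegrableOn (fun ζ : ℂ => g ‖ζ‖) unitDisc ↔
    IntegrableOn (fun s : ℝ => s • g s) (Ioo (0:ℝ) 1) := by
  have := integrableOn_fun_norm_addHaar (E := ℂ) (F := ℂ) volume (f := g) (r := 1)
  simpa [Complex.finrank_real_complex, unitDisc] using this

/-- The test functions. -/
def tf (ν : ℝ → ℝ) (h : ℝ → ℂ) (ζ : ℂ) : ℂ := h (arg ζ) * (((tl ν ‖ζ‖)⁻¹ : ℝ) : ℂ)

theorem tl_norm_cont {ν : ℝ → ℝ} (hν : IsRadialWeight ν) :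
    ContinuousOn (fun ζ : ℂ => tl ν ‖ζ‖) unitDisc := by
  refine hν.tl_cont.comp continuous_norm.continuousOn fun ζ hζ => ?_
  unfold unitDisc at hζ; rw [mem_ball_zero_iff] at hζ
  exact ⟨norm_nonneg _, hζ.le⟩

theorem tl_norm_pos {ν : ℝ → ℝ} (hν : IsRadialWeight ν) {ζ : ℂ} (hζ : ζ ∈ unitDisc) :
    0 < tl ν ‖ζ‖ := by
  unfold unitDisc at hζ; rw [mem_ball_zero_iff] at hζ
  exact hν.tl_pos (norm_nonneg _) hζ

theorem tf_meas {ν : ℝ → ℝ} (hν : IsRadialWeight ν) {h : ℝ → ℂ} (hh : Measurable h) :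
    AEStronglyMeasurable (tf ν h) (volume.restrict unitDisc) := by
  refine ((hh.comp measurable_arg).aestronglyMeasurable).mul ?_
  refine continuous_ofReal.comp_aestronglyMeasurable ?_
  refine ContinuousOn.aestronglyMeasurable ?_ measurableSet_ball
  exact (tl_norm_cont hν).inv₀ fun ζ hζ => (tl_norm_pos hν hζ).ne'

theorem tf_sup {ν : ℝ → ℝ} (hν : IsRadialWeight ν) {h : ℝ → ℂ} {H : ℝ}
    (hH : ∀ θ ∈ Ioc (-Real.pi) Real.pi, ‖h θ‖ ≤ H) :
    wSup (tl ν) (tf ν h) ≤ ENNReal.ofReal H := by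
  refine essSup_le_of_ae_le _ ?_
  filter_upwards [ae_restrict_mem (measurableSet_ball : MeasurableSet unitDisc)] with ζ hζ
  refine ENNReal.ofReal_le_ofReal ?_
  have := tl_norm_pos hν hζ
  unfold tf
  rw [norm_mul, norm_real, Real.norm_eq_abs, abs_of_pos (inv_pos.2 this), mul_assoc,
    inv_mul_cancel₀ this.ne', mul_one]
  exact hH _ (arg_mem_Ioc ζ)

theorem int_quot {ω ν : ℝ → ℝ} (hω : IsRadialWeight ω) (hν : IsRadialWeight ν)
    (hb : ProjBddH ω (tl ν)) :
    IntegrableOn (fun s => s * (ω s / tl ν s)) (Ioo (0:ℝ) 1) := by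
  obtain ⟨C, -, hC⟩ := hb
  have h1 := (hC (tf ν fun _ => 1) (tf_meas hν measurable_const)
    ((tf_sup hν (H := 1) (by simp)).trans_lt ENNReal.ofReal_lt_top)).1 0 (by simp [unitDisc])
  have h0 : ∀ ζ, bKer ω 0 ζ = (((2 * mN ω 1)⁻¹ : ℝ) : ℂ) := by
    intro ζ
    unfold bKer
    rw [tsum_eq_single 0 (by intro n hn; simp [hn]), mom_eq_mN]
    simp
  have h2 : bInt ω (tf ν fun _ => 1) 0 = fun ζ : ℂ =>
      (fun s : ℝ => (((2 * mN ω 1)⁻¹ * (ω s / tl ν s) : ℝ) : ℂ)) ‖ζ‖ := by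
    funext ζ
    unfold bInt tf
    rw [h0, conj_ofReal]; push_cast; ring
  rw [h2] at h1
  have h1' := (rad_int (fun s : ℝ => (((2 * mN ω 1)⁻¹ * (ω s / tl ν s) : ℝ) : ℂ))).1 h1
  have h3 := (h1'.re).const_mul (2 * mN ω 1)
  refine h3.congr (Filter.Eventually.of_forall fun s => ?_)
  have := hω.mN_pos 1
  simp only [Complex.real_smul, RCLike.re_to_complex]
  rw [re_ofReal_mul, ofReal_re]
  field_simp

theorem int_quot_pow {ω ν : ℝ → ℝ} (hω : IsRadialWeight ω) (hν : IsRadialWeight ν)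
    (hb : ProjBddH ω (tl ν)) (k : ℕ) :
    IntegrableOn (fun s => s ^ (k + 1) * (ω s / tl ν s)) (Ioo (0:ℝ) 1) := by
  have h := int_quot hω hν hb
  have h' : (fun s => s ^ (k + 1) * (ω s / tl ν s)) = 
    fun s => s ^ k * (s * (ω s / tl ν s)) := by funext s; ring
  rw [h']
  refine Integrable.mono h ?_ ?_
  · exact ((continuous_pow k).aestronglyMeasurable).mul h.aestronglyMeasurable
  · filter_upwards [ae_restrict_mem measurableSet_Ioo] with s hs
    rw [norm_mul, norm_pow]
    refine mul_le_of_le_one_left (norm_nonneg _) (pow_le_one₀ (norm_nonneg _) ?_)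
    rw [Real.norm_eq_abs, abs_of_pos hs.1]; exact hs.2.le

/-- Integrability of `f ω` for a test function. -/
theorem tf_int {ω ν : ℝ → ℝ} (hω : IsRadialWeight ω) (hν : IsRadialWeight ν)
    (hb : ProjBddH ω (tl ν)) {h : ℝ → ℂ} (hh : Measurable h) {H : ℝ}
    (hH : ∀ θ ∈ Ioc (-Real.pi) Real.pi, ‖h θ‖ ≤ H) :
    IntegrableOn (fun ζ : ℂ => h (arg ζ) * ((ω ‖ζ‖ / tl ν ‖ζ‖ : ℝ) : ℂ)) unitDisc := by
  have h1 : IntegrableOn (fun ζ : ℂ => (fun s : ℝ => ((ω s / tl ν s : ℝ) : ℂ)) ‖ζ‖) unitDisc := by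
    rw [rad_int (fun s : ℝ => ((ω s / tl ν s : ℝ) : ℂ))]
    refine (int_quot hω hν hb).ofReal.congr (Filter.Eventually.of_forall fun s => ?_)
    simp
  refine Integrable.bdd_mul (c := H) h1 ((hh.comp measurable_arg).aestronglyMeasurable) ?_
  exact Filter.Eventually.of_forall fun ζ => hH _ (arg_mem_Ioc ζ)

theorem proj_hasSum {ω ν : ℝ → ℝ} (hω : IsRadialWeight ω) (hν : IsRadialWeight ν)
    (hb : ProjBddH ω (tl ν)) {h : ℝ → ℂ} (hh : Measurable h) {H : ℝ}
    (hH : ∀ θ ∈ Ioc (-Real.pi) Real.pi, ‖h θ‖ ≤ H) {z : ℂ} (hz : z ∈ unitDisc) :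
    HasSum (fun n : ℕ => (Real.pi : ℂ)⁻¹ * (z ^ n / ((2 * mN ω (2 * n + 1) : ℝ) : ℂ) *
      (((mN (fun s => ω s / tl ν s) (n + 1) : ℝ) : ℂ) *
        ∫ θ in Ioo (-Real.pi) Real.pi, h θ * exp (-(n * θ * I))))) (bProj ω (tf ν h) z) := by
  have hz1 : ‖z‖ < 1 := by unfold unitDisc at hz; rwa [mem_ball_zero_iff] at hz
  have hfint := tf_int hω hν hb hh hH
  set F : ℕ → ℂ → ℂ := fun n ζ => z ^ n / ((2 * mN ω (2 * n + 1) : ℝ) : ℂ) *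
    (h (arg ζ) * ((ω ‖ζ‖ / tl ν ‖ζ‖ : ℝ) : ℂ) * (starRingEnd ℂ ζ) ^ n) with hF
  have hsum := summable_ker hω (norm_nonneg z) hz1
  have hFn : ∀ n, Integrable (F n) (volume.restrict unitDisc) := by
    intro n
    refine Integrable.const_mul ?_ _
    refine Integrable.mul_bdd (c := 1) hfint ?_ ?_
    · exact (Complex.continuous_conj.pow n).aestronglyMeasurable
    · filter_upwards [ae_restrict_mem (measurableSet_ball : MeasurableSet unitDisc)] with ζ hζ
      unfold unitDisc at hζ; rw [mem_ball_zero_iff] at hζ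
      rw [norm_pow, RCLike.norm_conj]
      exact pow_le_one₀ (norm_nonneg _) hζ.le
  have hb1 : ∀ n, ∀ ζ ∈ unitDisc, ‖F n ζ‖ ≤ ‖z‖ ^ n / (2 * mN ω (2 * n + 1)) *
      ‖h (arg ζ) * ((ω ‖ζ‖ / tl ν ‖ζ‖ : ℝ) : ℂ)‖ := by
    intro n ζ hζ
    unfold unitDisc at hζ; rw [mem_ball_zero_iff] at hζ
    have := hω.mN_pos (2 * n + 1)
    simp only [hF]
    rw [norm_mul, norm_div, norm_pow, norm_real, Real.norm_eq_abs, abs_of_pos (by positivity),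
      norm_mul (_ * _), norm_pow (starRingEnd ℂ ζ), RCLike.norm_conj]
    gcongr
    exact mul_le_of_le_one_right (norm_nonneg _) (pow_le_one₀ (norm_nonneg _) hζ.le)
  have hFs : Summable fun n => ∫ ζ in unitDisc, ‖F n ζ‖ := by
    refine Summable.of_nonneg_of_le (fun n => integral_nonneg fun _ => norm_nonneg _) (fun n => ?_)
      (hsum.mul_right (∫ ζ in unitDisc, ‖h (arg ζ) * ((ω ‖ζ‖ / tl ν ‖ζ‖ : ℝ) : ℂ)‖))
    rw [← integral_const_mul]
    exact setIntegral_mono_on (hFn n).norm (hfint.norm.const_mul _) measurableSet_ball (hb1 n)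
  have key := (hasSum_integral_of_summable_integral_norm hFn hFs).mul_left ((Real.pi : ℂ)⁻¹)
  have e1 : ∀ n, ∫ ζ in unitDisc, F n ζ = z ^ n / ((2 * mN ω (2 * n + 1) : ℝ) : ℂ) *
      (((mN (fun s => ω s / tl ν s) (n + 1) : ℝ) : ℂ) *
        ∫ θ in Ioo (-Real.pi) Real.pi, h θ * exp (-(n * θ * I))) := by
    intro n
    simp only [hF]
    rw [integral_const_mul, ← polar_int]
  simp only [e1] at key
  have e2 : bProj ω (tf ν h) z = (Real.pi : ℂ)⁻¹ * ∫ ζ in unitDisc, ∑' n, F n ζ := by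
    unfold bProj
    congr 1
    refine setIntegral_congr_fun measurableSet_ball fun ζ hζ => ?_
    unfold bInt tf bKer
    rw [Complex.conj_tsum, ← tsum_mul_left, ← tsum_mul_right]
    refine tsum_congr fun n => ?_
    simp only [hF, mom_eq_mN, map_div₀, map_pow, map_mul, conj_conj, conj_ofReal]
    push_cast
    rw [mul_pow]
    ring
  rw [e2]; exact key

theorem proj_bound {ω ν : ℝ → ℝ} (hν : IsRadialWeight ν)
    (hb : ProjBddH ω (tl ν)) : ∃ C : ℝ, 0 < C ∧ ∀ (h : ℝ → ℂ) (H : ℝ), Measurable h → 0 ≤ H →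
    (∀ θ ∈ Ioc (-Real.pi) Real.pi, ‖h θ‖ ≤ H) → ∀ z ∈ unitDisc,
      ‖bProj ω (tf ν h) z‖ * tl ν ‖z‖ ≤ C * H := by
  obtain ⟨C, hC0, hC⟩ := hb
  refine ⟨C, hC0, fun h H hh hH0 hH z hz => ?_⟩
  obtain ⟨-, h2, h3⟩ := hC (tf ν h) (tf_meas hν hh) ((tf_sup hν hH).trans_lt ENNReal.ofReal_lt_top)
  have hle : wSup (tl ν) (bProj ω (tf ν h)) ≤ ENNReal.ofReal (C * H) := by
    rw [ENNReal.ofReal_mul hC0.le]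
    exact h3.trans (by gcongr; exact tf_sup hν hH)
  have hae : ∀ᵐ w ∂(volume.restrict unitDisc), ‖bProj ω (tf ν h) w‖ * tl ν ‖w‖ ≤ C * H := by
    filter_upwards [ENNReal.ae_le_essSup (μ := volume.restrict unitDisc)
      (fun w => ENNReal.ofReal (‖bProj ω (tf ν h) w‖ * tl ν ‖w‖))] with w hw
    exact (ENNReal.ofReal_le_ofReal_iff (by positivity)).1 (hw.trans hle)
  have hcont : ContinuousOn (fun w => ‖bProj ω (tf ν h) w‖ * tl ν ‖w‖) unitDisc :=
    h2.continuousOn.norm.mul (tl_norm_cont hν)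
  have := Measure.eqOn_open_of_ae_eq (μ := volume) (U := unitDisc)
    (f := fun w => max (‖bProj ω (tf ν h) w‖ * tl ν ‖w‖) (C * H)) (g := fun _ => C * H)
    (by filter_upwards [hae] with w hw; exact max_eq_right hw) Metric.isOpen_ball
    (hcont.sup continuousOn_const) continuousOn_const
  have := this hz
  exact max_eq_right_iff.1 this

theorem fourier_exp (N n : ℕ) : ∫ θ in Ioo (-Real.pi) Real.pi,
    exp (N * (θ : ℝ) * I) * exp (-(n * θ * I)) = if n = N then 2 * (Real.pi : ℂ) else 0 := by
  rw [← integral_Ioc_eq_integral_Ioo,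
    ← intervalIntegral.integral_of_le (by linarith [Real.pi_pos])]
  split_ifs with h
  · subst h
    have : ∀ θ : ℝ, exp (n * (θ : ℝ) * I) * exp (-(n * θ * I)) = 1 := by
      intro θ; rw [← Complex.exp_add]; simp
    simp only [this]
    simp; ring
  · have hc : ((N : ℂ) - n) * I ≠ 0 := by
      refine mul_ne_zero (sub_ne_zero.2 ?_) I_ne_zero
      exact_mod_cast Ne.symm h
    have : ∀ θ : ℝ, exp (N * (θ : ℝ) * I) * exp (-(n * θ * I)) = exp (((N : ℂ) - n) * I * θ) := by
      intro θ; rw [← Complex.exp_add]; congr 1; ring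
    simp only [this]
    rw [integral_exp_mul_complex hc]
    have h2 : exp (((N : ℂ) - n) * I * (Real.pi : ℝ)) =
        exp (((N : ℂ) - n) * I * ((-Real.pi : ℝ) : ℂ)) := by
      rw [Complex.exp_eq_exp_iff_exists_int]
      refine ⟨(N : ℤ) - n, ?_⟩
      push_cast; ring
    rw [h2, sub_self, zero_div]

theorem fourier_id (n : ℕ) : ∫ θ in Ioo (-Real.pi) Real.pi,
    ((θ : ℝ) : ℂ) * exp (-(n * θ * I)) = 2 * (Real.pi : ℂ) * I * (-1) ^ n / n := by
  rw [← integral_Ioc_eq_integral_Ioo,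
    ← intervalIntegral.integral_of_le (by linarith [Real.pi_pos])]
  rcases Nat.eq_zero_or_pos n with h | h
  · subst h
    have e : ∫ x in (-Real.pi)..Real.pi, ((x : ℝ) : ℂ) = 0 := by
      rw [intervalIntegral.integral_ofReal, integral_id]; simp
    simpa using e
  · have hn : (n : ℂ) ≠ 0 := by exact_mod_cast h.ne'
    have hE : ∀ θ : ℝ, HasDerivAt (fun t : ℝ => exp (-(n * (t : ℂ) * I)))
        (exp (-(n * θ * I)) * (-(n * I))) θ := by
      intro θ
      have h0 : HasDerivAt (fun t : ℝ => -((n : ℂ) * (t : ℂ) * I)) (-(n * I)) θ := by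
        have := (((hasDerivAt_id θ).ofReal_comp.const_mul (n : ℂ)).mul_const I).neg
        refine this.congr_deriv ?_
        simp
      exact h0.cexp
    have hD : ∀ θ ∈ uIcc (-Real.pi) Real.pi,
        HasDerivAt (fun t : ℝ => (t : ℂ) * exp (-(n * (t : ℂ) * I)) * (I / n)
          + exp (-(n * (t : ℂ) * I)) / n ^ 2) ((θ : ℂ) * exp (-(n * θ * I))) θ := by
      intro θ _
      have h1 : HasDerivAt (fun t : ℝ => (t : ℂ)) 1 θ := by
        refine (hasDerivAt_id θ).ofReal_comp.congr_deriv ?_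
        simp
      have := ((h1.mul (hE θ)).mul_const (I / n)).add ((hE θ).div_const ((n : ℂ) ^ 2))
      refine this.congr_deriv ?_
      field_simp
      linear_combination (-(θ : ℂ) * n) * Complex.I_sq
    rw [intervalIntegral.integral_eq_sub_of_hasDerivAt hD]
    · have e1 : exp (-(n * ((Real.pi : ℝ) : ℂ) * I)) = (-1) ^ n := by
        rw [← Complex.exp_neg_pi_mul_I, ← Complex.exp_nat_mul]; congr 1; ring
      have e2 : exp (-(n * ((-Real.pi : ℝ) : ℂ) * I)) = (-1) ^ n := by
        rw [← Complex.exp_pi_mul_I, ← Complex.exp_nat_mul]; congr 1; push_cast; ring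
      rw [e1, e2]; push_cast; field_simp; ring
    · refine Continuous.intervalIntegrable ?_ _ _
      fun_prop

theorem condA {ω ν : ℝ → ℝ} (hω : IsRadialWeight ω) (hν : IsRadialWeight ν)
    (hb : ProjBddH ω (tl ν)) : ∃ C : ℝ, 0 < C ∧ ∀ (n : ℕ) (r : ℝ), 0 ≤ r → r < 1 →
      r ^ n * tl ν r * mN (fun s => ω s / tl ν s) (n + 1) ≤ C * mN ω (2 * n + 1) := by
  obtain ⟨C, hC0, hC⟩ := proj_bound hν hb
  refine ⟨C, hC0, fun N r hr hr1 => ?_⟩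
  set h : ℝ → ℂ := fun θ => exp (N * (θ : ℝ) * I) with hh
  have hm : Measurable h := Continuous.measurable (by rw [hh]; fun_prop)
  have hH : ∀ θ ∈ Ioc (-Real.pi) Real.pi, ‖h θ‖ ≤ 1 := by
    intro θ _
    have : (N : ℂ) * (θ : ℂ) = ((N * θ : ℝ) : ℂ) := by push_cast; ring
    simp only [hh, this, Complex.norm_exp_ofReal_mul_I, le_refl]
  have hz : (r : ℂ) ∈ unitDisc := by
    unfold unitDisc; rw [mem_ball_zero_iff, norm_real, Real.norm_eq_abs, abs_of_nonneg hr]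
    exact hr1
  have h1 := proj_hasSum hω hν hb hm hH hz
  have h2 := hC h 1 hm zero_le_one hH r hz
  simp only [hh, fourier_exp] at h1
  have h3 := h1.unique (hasSum_single N (by intro n hn; simp [hn]))
  have hp := hω.mN_pos (2 * N + 1)
  have hA : 0 ≤ mN (fun s => ω s / tl ν s) (N + 1) := by
    refine setIntegral_nonneg measurableSet_Ioo fun s hs => ?_
    exact mul_nonneg (pow_nonneg hs.1.le _) (div_nonneg (hω.1 s ⟨hs.1.le, hs.2⟩)
      (hν.tl_pos hs.1.le hs.2).le)
  have h4 : bProj ω (tf ν h) r =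
      ((r ^ N * mN (fun s => ω s / tl ν s) (N + 1) / mN ω (2 * N + 1) : ℝ) : ℂ) := by
    rw [h3, if_pos rfl]
    have : (Real.pi : ℂ) ≠ 0 := by exact_mod_cast Real.pi_ne_zero
    have : (mN ω (2 * N + 1) : ℂ) ≠ 0 := by exact_mod_cast hp.ne'
    push_cast
    field_simp
  rw [h4, norm_real, norm_real, Real.norm_eq_abs, Real.norm_eq_abs, abs_of_nonneg hr,
    abs_of_nonneg (by positivity), mul_one, div_mul_eq_mul_div, div_le_iff₀ hp] at h2
  linarith

theorem condB {ω ν : ℝ → ℝ} (hω : IsRadialWeight ω) (hν : IsRadialWeight ν)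
    (hb : ProjBddH ω (tl ν)) : ∃ C : ℝ, 0 < C ∧ ∀ (S : Finset ℕ) (r : ℝ), 0 ≤ r → r < 1 →
      (∑ n ∈ S, r ^ n * mN (fun s => ω s / tl ν s) (n + 1) / mN ω (2 * n + 1) / n) * tl ν r
        ≤ C := by
  obtain ⟨C, hC0, hC⟩ := proj_bound hν hb
  refine ⟨C * Real.pi, by positivity, fun S r hr hr1 => ?_⟩
  set h : ℝ → ℂ := fun θ => (θ : ℂ) with hh
  have hm : Measurable h := Continuous.measurable (by rw [hh]; fun_prop)
  have hH : ∀ θ ∈ Ioc (-Real.pi) Real.pi, ‖h θ‖ ≤ Real.pi := by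
    intro θ hθ
    simp only [hh, norm_real, Real.norm_eq_abs]
    exact abs_le.2 ⟨hθ.1.le, hθ.2⟩
  have hnz : ‖((-r : ℝ) : ℂ)‖ = r := by
    rw [norm_real, Real.norm_eq_abs, abs_neg, abs_of_nonneg hr]
  have hz : ((-r : ℝ) : ℂ) ∈ unitDisc := by
    unfold unitDisc; rw [mem_ball_zero_iff, hnz]
    exact hr1
  have h1 := proj_hasSum hω hν hb hm hH hz
  have h2 := hC h _ hm Real.pi_pos.le hH _ hz
  rw [hnz] at h2
  simp only [hh, fourier_id] at h1
  have hA : ∀ n, 0 ≤ mN (fun s => ω s / tl ν s) (n + 1) := fun n => by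
    refine setIntegral_nonneg measurableSet_Ioo fun s hs => ?_
    exact mul_nonneg (pow_nonneg hs.1.le _) (div_nonneg (hω.1 s ⟨hs.1.le, hs.2⟩)
      (hν.tl_pos hs.1.le hs.2).le)
  have h3 := Complex.hasSum_im h1
  have h4 : ∀ n : ℕ, ((Real.pi : ℂ)⁻¹ * (((-r : ℝ) : ℂ) ^ n / ((2 * mN ω (2 * n + 1) : ℝ) : ℂ) *
      (((mN (fun s => ω s / tl ν s) (n + 1) : ℝ) : ℂ) *
        (2 * (Real.pi : ℂ) * I * (-1) ^ n / n)))).im =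
      r ^ n * mN (fun s => ω s / tl ν s) (n + 1) / mN ω (2 * n + 1) / n := by
    intro n
    have hp := hω.mN_pos (2 * n + 1)
    have : (Real.pi : ℂ) ≠ 0 := by exact_mod_cast Real.pi_ne_zero
    have : (mN ω (2 * n + 1) : ℂ) ≠ 0 := by exact_mod_cast hp.ne'
    have hr2 : (r : ℂ) ^ n = ((-r : ℝ) : ℂ) ^ n * (-1) ^ n := by
      rw [← mul_pow]; push_cast; congr 1; ring
    have : ((Real.pi : ℂ)⁻¹ * (((-r : ℝ) : ℂ) ^ n / ((2 * mN ω (2 * n + 1) : ℝ) : ℂ) *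
      (((mN (fun s => ω s / tl ν s) (n + 1) : ℝ) : ℂ) *
        (2 * (Real.pi : ℂ) * I * (-1) ^ n / n)))) =
      ((r ^ n * mN (fun s => ω s / tl ν s) (n + 1) / mN ω (2 * n + 1) / n : ℝ) : ℂ) * I := by
      push_cast
      rw [hr2]
      push_cast
      field_simp
    rw [this]; simp only [Complex.im_ofReal_mul, I_im, mul_one]
  simp only [h4] at h3
  have h5 := sum_le_hasSum S (fun n _ => by
    have := hA n; have := hω.mN_pos (2 * n + 1); positivity) h3
  have h6 := (h5.trans (le_abs_self _)).trans (Complex.abs_im_le_norm _)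
  exact (mul_le_mul_of_nonneg_right h6 (hν.tl_pos hr hr1).le).trans h2

/-- Dyadic radii. -/
def rk (k : ℕ) : ℝ := 1 - (1 / 2) ^ k

theorem rk_nonneg (k : ℕ) : 0 ≤ rk k := by
  unfold rk; linarith [pow_le_one₀ (n := k) (by norm_num : (0:ℝ) ≤ 1 / 2) (by norm_num)]

theorem rk_lt_one (k : ℕ) : rk k < 1 := by
  unfold rk; linarith [pow_pos (by norm_num : (0:ℝ) < 1 / 2) k]

theorem rk_mono {k l : ℕ} (h : k ≤ l) : rk k ≤ rk l := by
  unfold rk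
  linarith [pow_le_pow_of_le_one (by norm_num : (0:ℝ) ≤ 1 / 2) (by norm_num) h]

theorem rk_zero : rk 0 = 0 := by simp [rk]

theorem rk_pow {k n : ℕ} (hk : 1 ≤ k) (hn : n ≤ 2 ^ k) : 1 / 4 ≤ rk k ^ n := by
  refine le_trans ?_ (pow_le_pow_of_le_one (rk_nonneg k) (rk_lt_one k).le hn)
  obtain ⟨l, rfl⟩ : ∃ l, k = l + 1 := ⟨k - 1, by omega⟩
  have h1 : (1:ℝ) / 2 ≤ rk (l + 1) ^ (2 ^ l) := by
    have := one_add_mul_sub_le_pow (a := rk (l + 1)) (by linarith [rk_nonneg (l + 1)]) (2 ^ l)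
    refine le_trans (le_of_eq ?_) this
    unfold rk
    push_cast
    rw [pow_succ, one_div, inv_pow]
    field_simp
    ring
  rw [pow_succ 2 l, pow_mul]
  nlinarith

theorem rk_loc {r : ℝ} (hr : 0 ≤ r) (hr1 : r < 1) : ∃ k, rk k ≤ r ∧ r < rk (k + 1) := by
  obtain ⟨n, h1, h2⟩ := exists_nat_pow_near_of_lt_one (x := 1 - r) (y := 1 / 2) (by linarith)
    (by linarith) (by norm_num) (by norm_num)
  exact ⟨n, by unfold rk; linarith, by unfold rk; linarith⟩

theorem pow_cut {s : ℝ} (hs : 0 ≤ s) (hs1 : s < 1) (k j : ℕ) :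
    s ^ (2 ^ (k + 1)) ≤ Real.exp (-2 ^ j) * s ^ (2 ^ k) + if rk (k - j) ≤ s then 1 else 0 := by
  split_ifs with h
  · have := pow_le_one₀ (n := 2 ^ (k + 1)) hs hs1.le
    have : 0 ≤ Real.exp (-2 ^ j) * s ^ (2 ^ k) := by positivity
    linarith
  · push Not at h
    rw [add_zero, pow_succ, mul_two, pow_add]
    refine mul_le_mul_of_nonneg_right ?_ (by positivity)
    rcases le_or_gt j k with hjk | hjk
    · obtain ⟨i, rfl⟩ : ∃ i, k = i + j := ⟨k - j, by omega⟩
      rw [Nat.add_sub_cancel] at h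
      have h1 : s ≤ Real.exp (-(1 / 2) ^ i) :=
        h.le.trans (Real.one_sub_le_exp_neg _)
      calc s ^ (2 ^ (i + j)) ≤ Real.exp (-(1 / 2) ^ i) ^ (2 ^ (i + j)) :=
            pow_le_pow_left₀ hs h1 _
        _ = Real.exp (-2 ^ j) := by
            rw [← Real.exp_nat_mul]; congr 1
            push_cast
            rw [pow_add, one_div, inv_pow]; field_simp
    · have : k - j = 0 := by omega
      rw [this, rk_zero] at h
      linarith

theorem exp_small (D : ℝ) (hD : 0 < D) : ∃ j : ℕ, D * Real.exp (-2 ^ j) ≤ 1 / 2 := by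
  obtain ⟨j, hj⟩ := pow_unbounded_of_one_lt (2 * D) (by norm_num : (1:ℝ) < 2)
  refine ⟨j, ?_⟩
  rw [Real.exp_neg, ← div_eq_mul_inv, div_le_iff₀ (Real.exp_pos _)]
  have := Real.add_one_le_exp ((2:ℝ) ^ j)
  linarith

theorem seq_up {W : ℕ → ℝ} {C : ℝ} (hC : 1 ≤ C) (hW : ∀ k, W k ≤ C * W (k + 1)) (k i : ℕ) :
    W k ≤ C ^ i * W (k + i) := by
  induction i with
  | zero => simp
  | succ i ih =>
    refine ih.trans ?_
    rw [pow_succ, mul_assoc]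
    exact mul_le_mul_of_nonneg_left (hW (k + i)) (by positivity)

theorem seq_down {W : ℕ → ℝ} {C : ℝ} (hC : 1 ≤ C) (hp : ∀ k, 0 < W k)
    (hW : ∀ k, W k ≤ C * W (k + 1)) (k j : ℕ) : W (k - j) ≤ C ^ j * W k := by
  have h := seq_up hC hW (k - j) (k - (k - j))
  rw [show k - j + (k - (k - j)) = k by omega] at h
  refine h.trans (mul_le_mul_of_nonneg_right (pow_le_pow_right₀ hC (by omega)) (hp k).le)

theorem seq_absorb {C : ℝ} (hC : 1 ≤ C) : ∃ K : ℝ, 0 < K ∧ ∀ W X : ℕ → ℝ, (∀ k, 0 < W k) →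
    (∀ k, W k ≤ C * W (k + 1)) → X 0 ≤ W 0 →
    (∀ k j, X (k + 1) ≤ Real.exp (-2 ^ j) * X k + W (k - j)) → ∀ k, X k ≤ K * W k := by
  obtain ⟨j, hj⟩ := exp_small C (by linarith)
  have hCj : 1 ≤ C ^ (j + 1) := one_le_pow₀ hC
  refine ⟨2 * C ^ (j + 1), by positivity, fun W X hp hW h0 hX k => ?_⟩
  induction k with
  | zero => nlinarith [hp 0]
  | succ k ih =>
    refine (hX k j).trans ?_
    have h1 : W (k - j) ≤ C ^ (j + 1) * W (k + 1) := by
      have := seq_down hC hp hW (k + 1) (j + 1)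
      rwa [Nat.add_sub_add_right] at this
    have h2 : Real.exp (-2 ^ j) * X k ≤ C ^ (j + 1) * W (k + 1) := by
      calc Real.exp (-2 ^ j) * X k ≤ Real.exp (-2 ^ j) * (2 * C ^ (j + 1) * (C * W (k + 1))) := by
            gcongr
            exact ih.trans (mul_le_mul_of_nonneg_left (hW k) (by positivity))
        _ = (2 * C ^ (j + 1) * W (k + 1)) * (C * Real.exp (-2 ^ j)) := by ring
        _ ≤ (2 * C ^ (j + 1) * W (k + 1)) * (1 / 2) := by
            have := hp (k + 1)
            gcongr
        _ = _ := by ring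
    linarith

theorem IsRadialWeight.rk_pos {ω : ℝ → ℝ} (h : IsRadialWeight ω) (k : ℕ) : 0 < tl ω (rk k) :=
  h.tl_pos (rk_nonneg k) (rk_lt_one k)

theorem dhat_seq {ω : ℝ → ℝ} (h : IsRadialWeight ω) (hd : Dhat ω) :
    ∃ C : ℝ, 1 ≤ C ∧ ∀ k, tl ω (rk k) ≤ C * tl ω (rk (k + 1)) := by
  obtain ⟨C, hC⟩ := hd
  refine ⟨max C 1, le_max_right _ _, fun k => ?_⟩
  have h1 := hC (rk k) ⟨rk_nonneg k, rk_lt_one k⟩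
  have h2 : (1 + rk k) / 2 = rk (k + 1) := by unfold rk; rw [pow_succ]; ring
  rw [h2] at h1
  exact h1.trans (mul_le_mul_of_nonneg_right (le_max_left _ _) (h.rk_pos _).le)

theorem seq_dhat {ω : ℝ → ℝ} (h : IsRadialWeight ω) {C : ℝ}
    (hC : ∀ k, 1 ≤ k → tl ω (rk k) ≤ C * tl ω (rk (k + 1))) : Dhat ω := by
  set D := max 1 (max C (tl ω (rk 0) / tl ω (rk 1)))
  have hD1 : 1 ≤ D := le_max_left _ _
  have hW : ∀ k, tl ω (rk k) ≤ D * tl ω (rk (k + 1)) := by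
    intro k
    rcases Nat.eq_zero_or_pos k with hk | hk
    · subst hk
      rw [← div_le_iff₀ (h.rk_pos _)]
      exact (le_max_right _ _).trans (le_max_right _ _)
    · exact (hC k hk).trans (mul_le_mul_of_nonneg_right
        ((le_max_left _ _).trans (le_max_right _ _)) (h.rk_pos _).le)
  refine ⟨D ^ 2, fun r hr => ?_⟩
  obtain ⟨k, h1, h2⟩ := rk_loc hr.1 hr.2
  refine (h.tl_anti (rk_nonneg k) h1 hr.2.le).trans ((seq_up hD1 hW k 2).trans ?_)
  refine mul_le_mul_of_nonneg_left (h.tl_anti (by linarith [hr.1]) ?_ (rk_lt_one _).le)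
    (by positivity)
  unfold rk at h2 ⊢
  rw [pow_succ] at h2
  rw [pow_succ, pow_succ]
  linarith

theorem seq_dcheck {ω : ℝ → ℝ} (h : IsRadialWeight ω) {i : ℕ}
    (hi : ∀ k, 1 ≤ k → 2 * tl ω (rk (k + i)) ≤ tl ω (rk k)) : Dcheck ω := by
  refine ⟨2 ^ (i + 1), 2, one_lt_pow₀ (by norm_num) (by omega), by norm_num, fun r hr => ?_⟩
  obtain ⟨k, h1, h2⟩ := rk_loc hr.1 hr.2
  have h3 : rk (k + 1 + i) ≤ 1 - (1 - r) / 2 ^ (i + 1) := by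
    have : (1 - r) / 2 ^ (i + 1) ≤ (1 / 2) ^ (k + 1 + i) := by
      rw [div_le_iff₀ (by positivity), show k + 1 + i = k + (i + 1) by omega, pow_add, mul_assoc,
        ← mul_pow]
      unfold rk at h1
      norm_num at h1 ⊢
      linarith
    unfold rk; linarith
  have h4 := h.tl_anti (rk_nonneg _) h3 (by
    have : 0 ≤ (1 - r) / 2 ^ (i + 1) := div_nonneg (by linarith [hr.2]) (by positivity)
    linarith)
  have h5 := h.tl_anti hr.1 h2.le (rk_lt_one _).le
  linarith [hi (k + 1) (by omega)]

theorem ind_int {ω : ℝ → ℝ} (h : IsRadialWeight ω) (ρ : ℝ) :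
    IntegrableOn (fun s => (if ρ ≤ s then 1 else 0) * ω s) (Ioo (0:ℝ) 1) := by
  have : (fun s => (if ρ ≤ s then 1 else 0) * ω s) = (Ici ρ).indicator ω := by
    funext s; by_cases hs : ρ ≤ s <;> simp [hs]
  rw [this]
  exact h.intOn.indicator measurableSet_Ici

theorem ind_int_eq (ω : ℝ → ℝ) {ρ : ℝ} (hρ : 0 ≤ ρ) (hρ1 : ρ < 1) :
    ∫ s in Ioo (0:ℝ) 1, (if ρ ≤ s then 1 else 0) * ω s = tl ω ρ := by
  have : (fun s => (if ρ ≤ s then 1 else 0) * ω s) = (Ici ρ).indicator ω := by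
    funext s; by_cases hs : ρ ≤ s <;> simp [hs]
  rw [this, setIntegral_indicator measurableSet_Ici, tl_eq ω hρ1.le]
  refine setIntegral_congr_set ?_
  rw [Filter.eventuallyEq_set]
  have : ∀ᵐ s : ℝ ∂volume, s ≠ ρ := by simp [ae_iff]
  filter_upwards [this] with s hs
  constructor
  · rintro ⟨h1, h2⟩; exact ⟨lt_of_le_of_ne h2 (Ne.symm hs), h1.2⟩
  · rintro ⟨h1, h2⟩; exact ⟨⟨hρ.trans_lt h1, h2⟩, h1.le⟩

theorem mN_upper {ω : ℝ → ℝ} (h : IsRadialWeight ω) {C : ℝ} (hC : 1 ≤ C)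
    (hW : ∀ k, tl ω (rk k) ≤ C * tl ω (rk (k + 1))) :
    ∃ K : ℝ, 0 < K ∧ ∀ k, mN ω (2 ^ k) ≤ K * tl ω (rk k) := by
  obtain ⟨K, hK, hX⟩ := seq_absorb hC
  refine ⟨K, hK, hX (fun k => tl ω (rk k)) (fun k => mN ω (2 ^ k)) h.rk_pos hW ?_ ?_⟩
  · rw [rk_zero, tl_eq ω zero_le_one]
    refine setIntegral_mono_on (h.int_pow _) h.intOn measurableSet_Ioo fun s hs => ?_
    exact mul_le_of_le_one_left (h.1 s ⟨hs.1.le, hs.2⟩) (pow_le_one₀ hs.1.le hs.2.le)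
  · intro k j
    beta_reduce
    rw [← ind_int_eq ω (rk_nonneg (k - j)) (rk_lt_one _)]
    unfold mN
    rw [← integral_const_mul, ← integral_add ((h.int_pow _).const_mul _) (ind_int h _)]
    refine setIntegral_mono_on (h.int_pow _) (((h.int_pow _).const_mul _).add (ind_int h _))
      measurableSet_Ioo fun s hs => ?_
    have := mul_le_mul_of_nonneg_right (pow_cut hs.1.le hs.2 k j) (h.1 s ⟨hs.1.le, hs.2⟩)
    linarith

theorem M_upper {ν : ℝ → ℝ} (h : IsRadialWeight ν) {C : ℝ} (hC : 1 ≤ C)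
    (hW : ∀ k, tl ν (rk k) ≤ C * tl ν (rk (k + 1))) :
    ∃ K : ℝ, 0 < K ∧ ∀ k s, 0 ≤ s → s < 1 → s ^ (2 ^ k) * tl ν s ≤ K * tl ν (rk k) := by
  obtain ⟨K, hK, hX⟩ := seq_absorb hC
  refine ⟨K, hK, fun k s hs hs1 => hX (fun k => tl ν (rk k)) (fun k => s ^ (2 ^ k) * tl ν s)
    h.rk_pos hW ?_ ?_ k⟩
  · rw [rk_zero]
    exact (mul_le_of_le_one_left (h.tl_pos hs hs1).le (pow_le_one₀ hs hs1.le)).trans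
      (h.tl_anti le_rfl hs hs1.le)
  · intro k j
    have h1 := mul_le_mul_of_nonneg_right (pow_cut hs hs1 k j) (h.tl_pos hs hs1).le
    have h2 : (if rk (k - j) ≤ s then 1 else 0) * tl ν s ≤ tl ν (rk (k - j)) := by
      split_ifs with hh
      · rw [one_mul]; exact h.tl_anti (rk_nonneg _) hh hs1.le
      · rw [zero_mul]; exact (h.rk_pos _).le
    linarith

theorem harm_block (k j : ℕ) : (j : ℝ) / 2 ≤ ∑ n ∈ Finset.Ico (α := ℕ) (2 ^ k) (2 ^ (k + j)), (1 : ℝ) / n := by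
  induction j with
  | zero => simp
  | succ j ih =>
    have h1 : 2 ^ k ≤ 2 ^ (k + j) := Nat.pow_le_pow_right (by norm_num) (by omega)
    have h2 : 2 ^ (k + j) ≤ 2 ^ (k + (j + 1)) := Nat.pow_le_pow_right (by norm_num) (by omega)
    rw [← Finset.sum_Ico_consecutive _ h1 h2]
    have h3 : (1:ℝ) / 2 ≤ ∑ n ∈ Finset.Ico (α := ℕ) (2 ^ (k + j)) (2 ^ (k + (j + 1))), (1 : ℝ) / n := by
      have := Finset.card_nsmul_le_sum (Finset.Ico (2 ^ (k + j)) (2 ^ (k + (j + 1))))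
        (fun n : ℕ => (1 : ℝ) / n) (1 / 2 ^ (k + (j + 1))) (fun n hn => by
          rw [Finset.mem_Ico] at hn
          have hn0 : 0 < n := lt_of_lt_of_le (by positivity) hn.1
          have : (n : ℝ) ≤ 2 ^ (k + (j + 1)) := by exact_mod_cast hn.2.le
          have : (0:ℝ) < n := by exact_mod_cast hn0
          gcongr)
      refine le_trans (le_of_eq ?_) this
      rw [Nat.card_Ico, nsmul_eq_mul, show k + (j + 1) = (k + j) + 1 by omega, pow_succ 2 (k + j),
        mul_two, Nat.add_sub_cancel, pow_succ]
      push_cast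
      field_simp
    push_cast
    linarith

theorem lowA {ω ν : ℝ → ℝ} (hω : IsRadialWeight ω) (hν : IsRadialWeight ν)
    (hb : ProjBddH ω (tl ν)) {r : ℝ} (hr : 0 ≤ r) (hr1 : r < 1) (n : ℕ) :
    r ^ (n + 1) * tl ω r ≤ tl ν r * mN (fun s => ω s / tl ν s) (n + 1) := by
  rw [← ind_int_eq ω hr hr1]
  unfold mN
  rw [← integral_const_mul, ← integral_const_mul]
  refine setIntegral_mono_on ((ind_int hω _).const_mul _)
    ((int_quot_pow hω hν hb n).const_mul _) measurableSet_Ioo fun s hs => ?_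
  have h0 := hω.1 s ⟨hs.1.le, hs.2⟩
  have h1 := hν.tl_pos hs.1.le hs.2
  have h1r := hν.tl_pos hr hr1
  have hs0 := hs.1
  split_ifs with h
  · have h2 := hν.tl_anti hr h hs.2.le
    calc r ^ (n + 1) * (1 * ω s) ≤ s ^ (n + 1) * ω s := by rw [one_mul]; gcongr
      _ = tl ν s * (s ^ (n + 1) * (ω s / tl ν s)) := by field_simp
      _ ≤ _ := by gcongr
  · rw [zero_mul, mul_zero]; positivity

theorem lowA2 {ω ν : ℝ → ℝ} (hω : IsRadialWeight ω) (hν : IsRadialWeight ν)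
    (hb : ProjBddH ω (tl ν)) {n : ℕ} {M : ℝ} (hM : ∀ s, 0 ≤ s → s < 1 → s ^ n * tl ν s ≤ M) :
    mN ω (2 * n + 1) ≤ M * mN (fun s => ω s / tl ν s) (n + 1) := by
  unfold mN
  rw [← integral_const_mul]
  refine setIntegral_mono_on (hω.int_pow _)
    ((int_quot_pow hω hν hb n).const_mul _) measurableSet_Ioo fun s hs => ?_
  have h0 := hω.1 s ⟨hs.1.le, hs.2⟩
  have h1 := hν.tl_pos hs.1.le hs.2
  have hs0 := hs.1
  calc s ^ (2 * n + 1) * ω s = (s ^ n * tl ν s) * (s ^ (n + 1) * (ω s / tl ν s)) := by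
        field_simp; ring
    _ ≤ _ := by gcongr; exact hM s hs.1.le hs.2

theorem quot_pos {ω ν : ℝ → ℝ} (hω : IsRadialWeight ω) (hν : IsRadialWeight ν)
    (hb : ProjBddH ω (tl ν)) (n : ℕ) : 0 < mN (fun s => ω s / tl ν s) (n + 1) := by
  have h := lowA hω hν hb (r := 1 / 2) (by norm_num) (by norm_num) n
  have h1 := hω.tl_pos (r := 1 / 2) (by norm_num) (by norm_num)
  have h2 := hν.tl_pos (r := 1 / 2) (by norm_num) (by norm_num)
  exact pos_of_mul_pos_right (lt_of_lt_of_le (by positivity) h) h2.le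

theorem mN_anti {ω : ℝ → ℝ} (h : IsRadialWeight ω) {k l : ℕ} (hkl : k ≤ l) : mN ω l ≤ mN ω k := by
  refine setIntegral_mono_on (h.int_pow _) (h.int_pow _) measurableSet_Ioo fun s hs => ?_
  exact mul_le_mul_of_nonneg_right (pow_le_pow_of_le_one hs.1.le hs.2.le hkl)
    (h.1 s ⟨hs.1.le, hs.2⟩)

/-- The tail comparison, valid when `ω ∈ D̂`. -/
theorem tail_comp {ω ν : ℝ → ℝ} (hω : IsRadialWeight ω) (hν : IsRadialWeight ν)
    (hb : ProjBddH ω (tl ν)) (hd : Dhat ω) : ∃ C : ℝ, 0 < C ∧ ∀ k i, 1 ≤ k → 1 ≤ i →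
      tl ν (rk k) * tl ω (rk (k + i)) ≤ C * tl ν (rk (k + i)) * tl ω (rk k) := by
  obtain ⟨C, hC, hW⟩ := dhat_seq hω hd
  obtain ⟨K, hK, hm⟩ := mN_upper hω hC hW
  obtain ⟨C₀, hC₀, hA⟩ := condA hω hν hb
  refine ⟨16 * C₀ * K, by positivity, fun k i hk hi => ?_⟩
  have h1 := hA (2 ^ k) (rk k) (rk_nonneg k) (rk_lt_one k)
  have h2 := lowA hω hν hb (rk_nonneg (k + i)) (rk_lt_one (k + i)) (2 ^ k)
  have h3 := rk_pow hk le_rfl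
  have h4 : 1 / 4 ≤ rk (k + i) ^ (2 ^ k + 1) := rk_pow (by omega) (by
    calc 2 ^ k + 1 ≤ 2 ^ k + 2 ^ k := by gcongr; exact Nat.one_le_two_pow
      _ = 2 ^ (k + 1) := by ring
      _ ≤ 2 ^ (k + i) := Nat.pow_le_pow_right (by norm_num) (by omega))
  have h5 : mN ω (2 * 2 ^ k + 1) ≤ K * tl ω (rk k) := (mN_anti hω (by omega)).trans (hm k)
  have hV := hν.rk_pos k
  have hV' := hν.rk_pos (k + i)
  have hW0 := hω.rk_pos (k + i)
  have hA0 := quot_pos hω hν hb (2 ^ k)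
  set A := mN (fun s => ω s / tl ν s) (2 ^ k + 1)
  have e1 : 1 / 4 * (tl ν (rk k) * A) ≤ C₀ * (K * tl ω (rk k)) := by
    calc 1 / 4 * (tl ν (rk k) * A) ≤ rk k ^ 2 ^ k * (tl ν (rk k) * A) := by gcongr
      _ ≤ C₀ * mN ω (2 * 2 ^ k + 1) := by linarith
      _ ≤ _ := by gcongr
  have e2 : 1 / 4 * tl ω (rk (k + i)) ≤ tl ν (rk (k + i)) * A :=
    le_trans (by gcongr) h2
  calc tl ν (rk k) * tl ω (rk (k + i)) = 4 * tl ν (rk k) * (1 / 4 * tl ω (rk (k + i))) := by ring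
    _ ≤ 4 * tl ν (rk k) * (tl ν (rk (k + i)) * A) := by gcongr
    _ = 16 * tl ν (rk (k + i)) * (1 / 4 * (tl ν (rk k) * A)) := by ring
    _ ≤ 16 * tl ν (rk (k + i)) * (C₀ * (K * tl ω (rk k))) := by gcongr
    _ = _ := by ring

theorem dhat_nu {ω ν : ℝ → ℝ} (hω : IsRadialWeight ω) (hν : IsRadialWeight ν)
    (hb : ProjBddH ω (tl ν)) (hd : Dhat ω) : Dhat ν := by
  obtain ⟨C, hC, hW⟩ := dhat_seq hω hd
  obtain ⟨D, hD, h⟩ := tail_comp hω hν hb hd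
  refine seq_dhat hν (C := D * C) fun k hk => ?_
  have h1 := h k 1 hk le_rfl
  have hV := hν.rk_pos (k + 1)
  have hW0 := hω.rk_pos (k + 1)
  refine le_of_mul_le_mul_right ?_ hW0
  calc _ ≤ _ := h1
    _ ≤ D * tl ν (rk (k + 1)) * (C * tl ω (rk (k + 1))) := by gcongr; exact hW k
    _ = _ := by ring

theorem dhat_om {ω ν : ℝ → ℝ} (hω : IsRadialWeight ω) (hν : IsRadialWeight ν)
    (hb : ProjBddH ω (tl ν)) (hd : Dhat ν) : Dhat ω := by
  obtain ⟨C, hC, hV⟩ := dhat_seq hν hd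
  obtain ⟨K, hK, hM⟩ := M_upper hν hC hV
  obtain ⟨C₀, hC₀, hA⟩ := condA hω hν hb
  obtain ⟨j, hj⟩ := exp_small (4 * C₀ * K * C) (by positivity)
  -- absorption
  have key : ∀ k, tl ν (rk (k + 1)) * mN (fun s => ω s / tl ν s) (2 ^ (k + 1) + 1) ≤
      8 * C₀ * tl ω (rk (k - j)) := by
    intro k
    have h1 := hA (2 ^ (k + 1)) (rk (k + 1)) (rk_nonneg _) (rk_lt_one _)
    have h3 := rk_pow (k := k + 1) (by omega) le_rfl
    have hA0 := quot_pos hω hν hb (2 ^ (k + 1))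
    have h2 : mN ω (2 * 2 ^ (k + 1) + 1) ≤ Real.exp (-2 ^ j) * (K * tl ν (rk k)) *
        mN (fun s => ω s / tl ν s) (2 ^ (k + 1) + 1) + tl ω (rk (k - j)) := by
      rw [← ind_int_eq ω (rk_nonneg (k - j)) (rk_lt_one _)]
      unfold mN
      rw [← integral_const_mul, ← integral_add ((int_quot_pow hω hν hb _).const_mul _)
        (ind_int hω _)]
      refine setIntegral_mono_on (hω.int_pow _)
        (((int_quot_pow hω hν hb _).const_mul _).add (ind_int hω _)) measurableSet_Ioo
        fun s hs => ?_
      have hw := hω.1 s ⟨hs.1.le, hs.2⟩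
      have hv := hν.tl_pos hs.1.le hs.2
      have hs0 := hs.1
      have hq : 0 ≤ s ^ (2 ^ (k + 1) + 1) * (ω s / tl ν s) := by positivity
      have hle1 : s ^ (2 ^ (k + 1) + 1) ≤ 1 := pow_le_one₀ hs.1.le hs.2.le
      have hi : (0:ℝ) ≤ if rk (k - j) ≤ s then 1 else 0 := by split_ifs <;> norm_num
      calc s ^ (2 * 2 ^ (k + 1) + 1) * ω s
          = s ^ 2 ^ (k + 1) * tl ν s * (s ^ (2 ^ (k + 1) + 1) * (ω s / tl ν s)) := by
            field_simp; ring
        _ ≤ (Real.exp (-2 ^ j) * s ^ (2 ^ k) + if rk (k - j) ≤ s then 1 else 0) * tl ν s *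
            (s ^ (2 ^ (k + 1) + 1) * (ω s / tl ν s)) := by
            gcongr; exact pow_cut hs.1.le hs.2 k j
        _ = Real.exp (-2 ^ j) * (s ^ (2 ^ k) * tl ν s) *
            (s ^ (2 ^ (k + 1) + 1) * (ω s / tl ν s)) +
            (if rk (k - j) ≤ s then 1 else 0) * (s ^ (2 ^ (k + 1) + 1) * ω s) := by
            field_simp
        _ ≤ _ := by
            refine add_le_add (mul_le_mul_of_nonneg_right
              (mul_le_mul_of_nonneg_left (hM k s hs.1.le hs.2) (Real.exp_pos _).le) hq)
              (mul_le_mul_of_nonneg_left (mul_le_of_le_one_left hw hle1) hi)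
    have hVk := hV k
    have hVp := hν.rk_pos (k + 1)
    set A := mN (fun s => ω s / tl ν s) (2 ^ (k + 1) + 1)
    set V := tl ν (rk (k + 1))
    have e1 : 1 / 4 * (V * A) ≤ C₀ * mN ω (2 * 2 ^ (k + 1) + 1) :=
      calc 1 / 4 * (V * A) ≤ rk (k + 1) ^ 2 ^ (k + 1) * (V * A) := by gcongr
        _ ≤ _ := by linarith
    have e2 : C₀ * mN ω (2 * 2 ^ (k + 1) + 1) ≤
        1 / 8 * (V * A) + C₀ * tl ω (rk (k - j)) := by
      calc C₀ * mN ω (2 * 2 ^ (k + 1) + 1)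
          ≤ C₀ * (Real.exp (-2 ^ j) * (K * (C * V)) * A + tl ω (rk (k - j))) := by
            refine mul_le_mul_of_nonneg_left (h2.trans ?_) hC₀.le
            gcongr
        _ = 1 / 4 * (4 * C₀ * K * C * Real.exp (-2 ^ j)) * (V * A) + C₀ * tl ω (rk (k - j)) := by
            ring
        _ ≤ 1 / 4 * (1 / 2) * (V * A) + C₀ * tl ω (rk (k - j)) := by gcongr
        _ = _ := by ring
    linarith
  refine seq_dhat hω (C := 4 ^ (2 ^ (j + 3)) * C ^ (j + 2) * (8 * C₀)) fun i hi => ?_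
  have h1 := key (i + 1 + j)
  rw [Nat.add_sub_cancel] at h1
  have h2 := lowA hω hν hb (rk_nonneg i) (rk_lt_one i) (2 ^ (i + 1 + j + 1))
  have h3 : (1 / 4 : ℝ) ^ (2 ^ (j + 3)) ≤ rk i ^ (2 ^ (i + 1 + j + 1) + 1) := by
    calc (1 / 4 : ℝ) ^ (2 ^ (j + 3)) ≤ (rk i ^ (2 ^ i)) ^ (2 ^ (j + 3)) := by
          gcongr; exact rk_pow hi le_rfl
      _ = rk i ^ (2 ^ (i + j + 3)) := by rw [← pow_mul]; congr 1; ring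
      _ ≤ _ := pow_le_pow_of_le_one (rk_nonneg i) (rk_lt_one i).le (by
          have : 1 ≤ 2 ^ (i + 1 + j + 1) := Nat.one_le_two_pow
          have e : 2 ^ (i + j + 3) = 2 ^ (i + 1 + j + 1) + 2 ^ (i + 1 + j + 1) := by ring
          omega)
  have h4 := seq_up (W := fun k => tl ν (rk k)) hC hV i (j + 2)
  simp only [show i + (j + 2) = i + 1 + j + 1 by omega] at h4
  have hW0 := hω.rk_pos i
  have hA0 := quot_pos hω hν hb (2 ^ (i + 1 + j + 1))
  set A := mN (fun s => ω s / tl ν s) (2 ^ (i + 1 + j + 1) + 1)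
  have e1 : (1 / 4 : ℝ) ^ (2 ^ (j + 3)) * tl ω (rk i) ≤
      C ^ (j + 2) * (8 * C₀ * tl ω (rk (i + 1))) :=
    calc (1 / 4 : ℝ) ^ (2 ^ (j + 3)) * tl ω (rk i)
        ≤ rk i ^ (2 ^ (i + 1 + j + 1) + 1) * tl ω (rk i) := by gcongr
      _ ≤ tl ν (rk i) * A := h2
      _ ≤ C ^ (j + 2) * tl ν (rk (i + 1 + j + 1)) * A := by gcongr
      _ = C ^ (j + 2) * (tl ν (rk (i + 1 + j + 1)) * A) := by ring
      _ ≤ _ := by gcongr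
  rw [one_div, inv_pow, inv_mul_le_iff₀ (by positivity)] at e1
  linarith

theorem nu_decay {ω ν : ℝ → ℝ} (hω : IsRadialWeight ω) (hν : IsRadialWeight ν)
    (hb : ProjBddH ω (tl ν)) (hd : Dhat ν) : ∃ C : ℝ, 0 < C ∧ ∀ k j : ℕ, 1 ≤ k →
      j * tl ν (rk (k + j)) ≤ C * tl ν (rk k) := by
  obtain ⟨C, hC, hV⟩ := dhat_seq hν hd
  obtain ⟨K, hK, hM⟩ := M_upper hν hC hV
  obtain ⟨C₀, hC₀, hB⟩ := condB hω hν hb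
  refine ⟨8 * C₀ * K, by positivity, fun k j hk => ?_⟩
  have h1 := hB (Finset.Ico (2 ^ k) (2 ^ (k + j))) (rk (k + j)) (rk_nonneg _) (rk_lt_one _)
  have hVk := hν.rk_pos k
  have hVj := hν.rk_pos (k + j)
  have h2 : 1 / (4 * (K * tl ν (rk k))) * ((j : ℝ) / 2) ≤
      ∑ n ∈ Finset.Ico (α := ℕ) (2 ^ k) (2 ^ (k + j)), rk (k + j) ^ n *
        mN (fun s => ω s / tl ν s) (n + 1) / mN ω (2 * n + 1) / n := by
    refine (mul_le_mul_of_nonneg_left (harm_block k j) (by positivity)).trans ?_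
    rw [Finset.mul_sum]
    refine Finset.sum_le_sum fun n hn => ?_
    rw [Finset.mem_Ico] at hn
    rw [mul_one_div]
    refine div_le_div_of_nonneg_right ?_ (Nat.cast_nonneg n)
    have h3 := rk_pow (k := k + j) (by omega) hn.2.le
    have h4 := lowA2 hω hν hb (n := n) (M := K * tl ν (rk k)) (fun s hs hs1 =>
      (mul_le_mul_of_nonneg_right (pow_le_pow_of_le_one hs hs1.le hn.1)
        (hν.tl_pos hs hs1).le).trans (hM k s hs hs1))
    have hm := hω.mN_pos (2 * n + 1)
    have hA0 := quot_pos hω hν hb n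
    rw [div_le_div_iff₀ (by positivity) hm, one_mul]
    calc mN ω (2 * n + 1) ≤ K * tl ν (rk k) * mN (fun s => ω s / tl ν s) (n + 1) := h4
      _ = 1 / 4 * mN (fun s => ω s / tl ν s) (n + 1) * (4 * (K * tl ν (rk k))) := by ring
      _ ≤ _ := by gcongr
  have h5 := (mul_le_mul_of_nonneg_right h2 hVj.le).trans h1
  have h6 : 1 / (4 * (K * tl ν (rk k))) * ((j : ℝ) / 2) * tl ν (rk (k + j)) =
      (j * tl ν (rk (k + j))) / (8 * K * tl ν (rk k)) := by field_simp; ring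
  rw [h6, div_le_iff₀ (by positivity)] at h5
  linarith


/-- Corollary: if `P_ω : L^∞_ν̂ → H^∞_ν̂` is bounded and `ω ∈ D̂` or `ν ∈ D̂`,
then both `ω` and `ν` belong to `D`. -/
theorem stmt19 (ω ν : ℝ → ℝ) (hω : IsRadialWeight ω) (hν : IsRadialWeight ν)
    (hb : ProjBddH ω (tl ν)) (h : Dhat ω ∨ Dhat ν) :
    DD ω ∧ DD ν := by

  have hdω : Dhat ω := h.elim id (dhat_om hω hν hb)
  have hdν : Dhat ν := dhat_nu hω hν hb hdω
  obtain ⟨C, hC, hN⟩ := nu_decay hω hν hb hdν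
  obtain ⟨D, hD, hT⟩ := tail_comp hω hν hb hdω
  refine ⟨⟨hdω, ?_⟩, hdν, ?_⟩
  · obtain ⟨i, hi⟩ := exists_nat_gt (max 1 (2 * (D * C)))
    have hi1 : (1:ℝ) < i := (le_max_left _ _).trans_lt hi
    have hi2 : 2 * (D * C) < i := (le_max_right _ _).trans_lt hi
    have hi1' : 1 ≤ i := by
      have : 1 < i := by exact_mod_cast hi1
      omega
    refine seq_dcheck hω (i := i) fun k hk => ?_
    have h1 := hT k i hk hi1'
    have h2 := hN k i hk
    have hV := hν.rk_pos k
    have hW := hω.rk_pos k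
    have hW' := hω.rk_pos (k + i)
    refine le_of_mul_le_mul_left (a := tl ν (rk k) * (D * C)) ?_ (by positivity)
    calc tl ν (rk k) * (D * C) * (2 * tl ω (rk (k + i)))
        = 2 * (D * C) * (tl ν (rk k) * tl ω (rk (k + i))) := by ring
      _ ≤ i * (tl ν (rk k) * tl ω (rk (k + i))) := by gcongr
      _ ≤ i * (D * tl ν (rk (k + i)) * tl ω (rk k)) := by gcongr
      _ = D * tl ω (rk k) * (i * tl ν (rk (k + i))) := by ring
      _ ≤ D * tl ω (rk k) * (C * tl ν (rk k)) := by gcongr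
      _ = _ := by ring
  · obtain ⟨i, hi⟩ := exists_nat_gt (2 * C)
    refine seq_dcheck hν (i := i) fun k hk => ?_
    have h2 := hN k i hk
    have hV' := hν.rk_pos (k + i)
    refine le_of_mul_le_mul_left (a := C) ?_ hC
    calc C * (2 * tl ν (rk (k + i))) = 2 * C * tl ν (rk (k + i)) := by ring
      _ ≤ i * tl ν (rk (k + i)) := by gcongr
      _ ≤ _ := h2
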